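/- arXiv:1504.04279 — 7 statements merged into one kernel-verified Lean document; each statement's English description precedes it below -/
import Mathlib

section
/- Let X be a pure simplicial complex on a finite vertex set V and let A be a nonempty induced subcomplex of X, say A = X|_W for W ⊆ V, such that the relative simplicial complex Q = X ∖ A is not partitionable. Let k be the total number of faces of A (including the empty face) and let N > k. Let C_N be the simplicial complex on the vertex set W ⊔ ({1,…,N} × (V∖W)) obtained by gluing N disjoint copies of X along A, i.e. the faces of C_N are the sets φ_i(σ) for σ ∈ X and 1 ≤ i ≤ N, where φ_i fixes the vertices in W and sends each vertex v ∈ V∖W to (i,v). Then C_N is not partitionable. -/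
/-- The facets (maximal faces) of a collection of finite sets. -/
def facets {V : Type*} [DecidableEq V] (Φ : Finset (Finset V)) : Finset (Finset V) :=
  Φ.filter (fun F => ∀ G ∈ Φ, F ⊆ G → F = G)

/-- A (relative or absolute) simplicial complex `Φ` is partitionable if it decomposes as a
disjoint union of Boolean intervals `[R F, F]`, one for each facet `F`. -/
def Partitionable {V : Type*} [DecidableEq V] (Φ : Finset (Finset V)) : Prop :=
  ∃ R : Finset V → Finset V,
    (∀ F ∈ facets Φ, R F ⊆ F) ∧
    (∀ F ∈ facets Φ, ∀ σ : Finset V, R F ⊆ σ → σ ⊆ F → σ ∈ Φ) ∧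
    (∀ σ ∈ Φ, ∃! F, F ∈ facets Φ ∧ R F ⊆ σ ∧ σ ⊆ F)

/-!
Each copy of `X ∖ A` is closed under passing to larger faces of `C_N`, and distinct copies are
disjoint, so in a partitioning of `C_N` the interval below a facet of one copy meets no other copy.
If this interval also missed `A` for every facet of some copy, the partitioning would restrict to
that copy. Otherwise every copy has a facet whose interval contains a face of `A`; as `A` has fewer
than `N` faces, two of these intervals, from different copies, share a face, a contradiction.
-/

open Finset

section Partitioning

variable {V V' ι : Type*} [DecidableEq V] [DecidableEq V'] {Φ Ψ : Finset (Finset V)}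
  {R : Finset V → Finset V} {F : Finset V} {f : V → V'}

theorem mem_facets : F ∈ facets Φ ↔ Maximal (· ∈ Φ) F := by
  rw [facets, mem_filter, maximal_iff]

theorem mem_of_mem_facets (hF : F ∈ facets Φ) : F ∈ Φ :=
  (mem_facets.1 hF).prop

theorem mem_facets_iff_of_isRelUpperSet (hΨ : IsRelUpperSet (Ψ : Set (Finset V)) (· ∈ Φ))
    (hF : F ∈ Ψ) : F ∈ facets Ψ ↔ F ∈ facets Φ := by
  rw [mem_facets, mem_facets]
  refine ⟨fun h => ⟨hΨ.prop_of_mem hF, fun G hG hFG => ?_⟩,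
    fun h => h.mono (fun G hG => hΨ.prop_of_mem hG) hF⟩
  exact h.le_of_ge (hΨ.mem_of_le hF hFG hG) hFG

theorem image_mem_facets_image_iff (hf : Function.Injective f) :
    F.image f ∈ facets (Φ.image (image f)) ↔ F ∈ facets Φ := by
  simp only [facets, mem_filter, (image_injective hf).mem_finset_image, forall_mem_image,
    image_subset_image_iff hf, (image_injective hf).eq_iff]

theorem image_mem_Icc_image_iff (hf : Function.Injective f) {ρ σ τ : Finset V} :
    σ.image f ∈ Icc (ρ.image f) (τ.image f) ↔ σ ∈ Icc ρ τ := by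
  simp only [mem_Icc, image_subset_image_iff hf]

/-- `R` assigns to each facet of `Φ` the bottom of its interval in a partitioning of `Φ`; its
values at other sets are irrelevant. -/
structure IsPartitioning (Φ : Finset (Finset V)) (R : Finset V → Finset V) : Prop where
  subset : ∀ F ∈ facets Φ, R F ⊆ F
  Icc_subset : ∀ F ∈ facets Φ, Icc (R F) F ⊆ Φ
  existsUnique : ∀ σ ∈ Φ, ∃! F, F ∈ facets Φ ∧ σ ∈ Icc (R F) F

theorem partitionable_iff_exists_isPartitioning :
    Partitionable Φ ↔ ∃ R, IsPartitioning Φ R := by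
  refine exists_congr fun R => ⟨fun ⟨hR, hsub, huniq⟩ => ⟨hR, fun F hF σ hσ => ?_, ?_⟩,
    fun h => ⟨h.subset, fun F hF σ hRσ hσF => ?_, ?_⟩⟩
  · exact hsub F hF σ (mem_Icc.1 hσ).1 (mem_Icc.1 hσ).2
  · simpa only [mem_Icc] using huniq
  · exact h.Icc_subset F hF (mem_Icc.2 ⟨hRσ, hσF⟩)
  · simpa only [mem_Icc] using h.existsUnique

theorem IsPartitioning.of_isRelUpperSet (h : IsPartitioning Φ R)
    (hΨ : IsRelUpperSet (Ψ : Set (Finset V)) (· ∈ Φ))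
    (hIcc : ∀ F ∈ facets Ψ, Icc (R F) F ⊆ Ψ) : IsPartitioning Ψ R := by
  have facet_of_facet {F} (hF : F ∈ facets Ψ) : F ∈ facets Φ :=
    (mem_facets_iff_of_isRelUpperSet hΨ (mem_of_mem_facets hF)).1 hF
  refine ⟨fun F hF => h.subset F (facet_of_facet hF), hIcc, fun σ hσ => ?_⟩
  obtain ⟨F, ⟨hF, hσF⟩, huniq⟩ := h.existsUnique σ (hΨ.prop_of_mem hσ)
  have hFΨ : F ∈ Ψ := hΨ.mem_of_le hσ (mem_Icc.1 hσF).2 (mem_of_mem_facets hF)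
  exact ⟨F, ⟨(mem_facets_iff_of_isRelUpperSet hΨ hFΨ).2 hF, hσF⟩,
    fun G ⟨hG, hσG⟩ => huniq G ⟨facet_of_facet hG, hσG⟩⟩

theorem Partitionable.of_image (hf : Function.Injective f)
    (h : Partitionable (Φ.image (image f))) : Partitionable Φ := by
  obtain ⟨R, hR⟩ := partitionable_iff_exists_isPartitioning.1 h
  have exists_bottom : ∀ F ∈ facets Φ, ∃ ρ ⊆ F, ρ.image f = R (F.image f) := fun F hF =>
    subset_image_iff.1 (hR.subset _ ((image_mem_facets_image_iff hf).2 hF))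
  choose! S hSF hSR using exists_bottom
  have image_mem_iff {F} (hF : F ∈ facets Φ) (σ : Finset V) :
      σ.image f ∈ Icc (R (F.image f)) (F.image f) ↔ σ ∈ Icc (S F) F := by
    rw [← hSR F hF, image_mem_Icc_image_iff hf]
  refine partitionable_iff_exists_isPartitioning.2 ⟨S, hSF, fun F hF σ hσ => ?_, fun σ hσ => ?_⟩
  · exact (image_injective hf).mem_finset_image.1 <|
      hR.Icc_subset _ ((image_mem_facets_image_iff hf).2 hF) ((image_mem_iff hF σ).2 hσ)
  · obtain ⟨G, ⟨hG, hσG⟩, huniq⟩ := hR.existsUnique _ (mem_image_of_mem _ hσ)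
    obtain ⟨F, -, rfl⟩ := mem_image.1 (mem_of_mem_facets hG)
    have hF : F ∈ facets Φ := (image_mem_facets_image_iff hf).1 hG
    refine ⟨F, ⟨hF, (image_mem_iff hF σ).1 hσG⟩, fun F' ⟨hF', hσF'⟩ => ?_⟩
    exact image_injective hf <|
      huniq _ ⟨(image_mem_facets_image_iff hf).2 hF', (image_mem_iff hF' σ).2 hσF'⟩

theorem Partitionable.exists_partitionable_of_card_sdiff_lt (h : Partitionable Φ) {I : Finset ι}
    {Ψ : ι → Finset (Finset V)} (hdisj : (I : Set ι).PairwiseDisjoint Ψ)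
    (hΨ : ∀ i ∈ I, IsRelUpperSet (Ψ i : Set (Finset V)) (· ∈ Φ))
    (hcard : #(Φ \ I.biUnion Ψ) < #I) : ∃ i ∈ I, Partitionable (Ψ i) := by
  obtain ⟨R, hR⟩ := partitionable_iff_exists_isPartitioning.1 h
  by_contra! hnot
  have exists_escape : ∀ i ∈ I, ∃ F ∈ facets (Ψ i), ∃ σ ∈ Icc (R F) F, σ ∉ Ψ i := by
    intro i hi
    by_contra! hIcc
    exact hnot i hi <| partitionable_iff_exists_isPartitioning.2
      ⟨R, hR.of_isRelUpperSet (hΨ i hi) hIcc⟩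
  choose! F hF σ hσF hσ using exists_escape
  have hFΦ : ∀ i ∈ I, F i ∈ facets Φ := fun i hi =>
    (mem_facets_iff_of_isRelUpperSet (hΨ i hi) (mem_of_mem_facets (hF i hi))).1 (hF i hi)
  have eq_of_mem {i j} (hi : i ∈ I) (hj : j ∈ I) (hij : F i ∈ Ψ j) : i = j :=
    hdisj.elim_finset hi hj _ (mem_of_mem_facets (hF i hi)) hij
  have hσ_sdiff : ∀ i ∈ I, σ i ∈ Φ \ I.biUnion Ψ := by
    intro i hi
    refine mem_sdiff.2 ⟨hR.Icc_subset _ (hFΦ i hi) (hσF i hi), fun hmem => ?_⟩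
    obtain ⟨j, hj, hσj⟩ := mem_biUnion.1 hmem
    have hFj : F i ∈ Ψ j :=
      (hΨ j hj).mem_of_le hσj (mem_Icc.1 (hσF i hi)).2 (mem_of_mem_facets (hFΦ i hi))
    obtain rfl := eq_of_mem hi hj hFj
    exact hσ i hi hσj
  obtain ⟨i, hi, j, hj, hij, hσij⟩ := exists_ne_map_eq_of_card_lt_of_maps_to hcard hσ_sdiff
  have hFij : F i = F j := (hR.existsUnique _ (mem_sdiff.1 (hσ_sdiff i hi)).1).unique
    ⟨hFΦ i hi, hσF i hi⟩ ⟨hFΦ j hj, hσij ▸ hσF j hj⟩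
  exact hij (eq_of_mem hi hj (hFij ▸ mem_of_mem_facets (hF j hj)))

end Partitioning

section Gluing

variable {V ι : Type*} [DecidableEq V] {W σ τ : Finset V} {i j : ι} {v : V}

/-- The embedding `φ_i` of the vertices of the `i`-th copy of a complex, in the gluing of copies
along the vertex set `W`. -/
def glueMap (W : Finset V) (i : ι) (v : V) : V ⊕ (ι × V) :=
  if v ∈ W then Sum.inl v else Sum.inr (i, v)

theorem glueMap_of_mem (hv : v ∈ W) : glueMap W i v = Sum.inl v :=
  if_pos hv

theorem glueMap_eq_inr_iff {u : V} : glueMap W j u = Sum.inr (i, v) ↔ u ∉ W ∧ j = i ∧ u = v := by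
  by_cases hu : u ∈ W <;> simp [glueMap, hu]

theorem glueMap_injective (W : Finset V) (i : ι) : Function.Injective (glueMap W i) := by
  intro u v huv
  unfold glueMap at huv
  split_ifs at huv <;> simp_all only [Sum.inl.injEq, Sum.inr.injEq, Prod.mk.injEq]

/-- The faces outside the subcomplex induced on `W`, that is, the relative complex `X ∖ X|_W`. -/
def outerFaces (W : Finset V) (X : Finset (Finset V)) : Finset (Finset V) :=
  {σ ∈ X | ¬ σ ⊆ W}

variable [DecidableEq ι] {I : Finset ι} {X : Finset (Finset V)}

theorem image_glueMap_of_subset (hσ : σ ⊆ W) : σ.image (glueMap W i) = σ.image Sum.inl :=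
  image_congr fun _ hv => glueMap_of_mem (hσ hv)

theorem index_eq_of_image_glueMap_subset (hσ : ¬ σ ⊆ W)
    (h : σ.image (glueMap W i) ⊆ τ.image (glueMap W j)) : i = j := by
  obtain ⟨v, hvσ, hvW⟩ := not_subset.1 hσ
  have hv : glueMap W i v = Sum.inr (i, v) := glueMap_eq_inr_iff.2 ⟨hvW, rfl, rfl⟩
  obtain ⟨u, -, hu⟩ := mem_image.1 (h (mem_image_of_mem _ hvσ))
  exact (glueMap_eq_inr_iff.1 (hu.trans hv)).2.1.symm

/-- The complex `C_N`, with the copies of `X` indexed by an arbitrary finite set `I`, glued along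
the subcomplex induced on `W`. -/
def gluedCopies (W : Finset V) (I : Finset ι) (X : Finset (Finset V)) :
    Finset (Finset (V ⊕ (ι × V))) :=
  I.biUnion fun i => X.image (image (glueMap W i))

theorem pairwiseDisjoint_image_outerFaces (W : Finset V) (I : Finset ι) (X : Finset (Finset V)) :
    (I : Set ι).PairwiseDisjoint fun i => (outerFaces W X).image (image (glueMap W i)) := by
  refine fun i _ j _ hij => disjoint_left.2 fun G hGi hGj => hij ?_
  obtain ⟨σ, hσ, rfl⟩ := mem_image.1 hGi
  obtain ⟨τ, -, hτσ⟩ := mem_image.1 hGj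
  exact index_eq_of_image_glueMap_subset (mem_filter.1 hσ).2 hτσ.superset

theorem isRelUpperSet_image_outerFaces (hi : i ∈ I) :
    IsRelUpperSet ((outerFaces W X).image (image (glueMap W i)) : Set (Finset (V ⊕ (ι × V))))
      (· ∈ gluedCopies W I X) := by
  intro G hG
  obtain ⟨σ, hσ, rfl⟩ := mem_image.1 (mem_coe.1 hG)
  obtain ⟨hσX, hσW⟩ := mem_filter.1 hσ
  refine ⟨mem_biUnion.2 ⟨i, hi, mem_image_of_mem _ hσX⟩, fun H hσH hH => ?_⟩
  obtain ⟨j, -, hHj⟩ := mem_biUnion.1 hH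
  obtain ⟨τ, hτ, rfl⟩ := mem_image.1 hHj
  obtain rfl := index_eq_of_image_glueMap_subset hσW hσH
  have hστ : σ ⊆ τ := (image_subset_image_iff (glueMap_injective W i)).1 hσH
  exact mem_coe.2 <| mem_image_of_mem _ <| mem_filter.2 ⟨hτ, fun hτW => hσW (hστ.trans hτW)⟩

theorem card_gluedCopies_sdiff_le (W : Finset V) (I : Finset ι) (X : Finset (Finset V)) :
    #(gluedCopies W I X \ I.biUnion fun i => (outerFaces W X).image (image (glueMap W i))) ≤
      #{σ ∈ X | σ ⊆ W} := by
  refine (card_le_card fun G hG => ?_).trans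
    (card_image_le (f := image (Sum.inl : V → V ⊕ (ι × V))))
  obtain ⟨hG, hGouter⟩ := mem_sdiff.1 hG
  obtain ⟨i, hi, hGi⟩ := mem_biUnion.1 hG
  obtain ⟨σ, hσ, rfl⟩ := mem_image.1 hGi
  have hσW : σ ⊆ W := by
    by_contra hσW
    exact hGouter (mem_biUnion.2 ⟨i, hi, mem_image_of_mem _ (mem_filter.2 ⟨hσ, hσW⟩)⟩)
  exact mem_image.2 ⟨σ, mem_filter.2 ⟨hσ, hσW⟩, (image_glueMap_of_subset hσW).symm⟩

theorem glued_complex_not_partitionable_general (X : Finset (Finset V)) (W : Finset V)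
    (hQ : ¬ Partitionable (X \ {σ ∈ X | σ ⊆ W})) (I : Finset ι) (hI : #{σ ∈ X | σ ⊆ W} < #I) :
    ¬ Partitionable (gluedCopies W I X) := by
  intro h
  obtain ⟨i, -, hi⟩ := h.exists_partitionable_of_card_sdiff_lt
    (pairwiseDisjoint_image_outerFaces W I X) (fun i hi => isRelUpperSet_image_outerFaces hi)
    ((card_gluedCopies_sdiff_le W I X).trans_lt hI)
  rw [← filter_not] at hQ
  exact hQ (hi.of_image (glueMap_injective W i))

end Gluing

/-- Let `X` be a pure simplicial complex on a finite vertex set `V`, and let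
`A = X|_W` be a nonempty induced subcomplex such that the relative complex
`Q = X ∖ A` is not partitionable.  If `N` exceeds the number `k` of faces of `A`,
then the complex `C_N`, obtained by gluing `N` disjoint copies of `X` along `A`
(the `i`-th copy embedded via `φ_i`, which fixes the vertices in `W` and sends each
vertex `v ∉ W` to `(i, v)`), is not partitionable. -/
theorem glued_complex_not_partitionable
    {V : Type*} [DecidableEq V] [Fintype V]
    (X : Finset (Finset V))
    (hcomplex : ∀ σ ∈ X, ∀ τ ⊆ σ, τ ∈ X)
    (hpure : ∀ F ∈ facets X, ∀ G ∈ facets X, F.card = G.card)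
    (W : Finset V)
    (A : Finset (Finset V)) (hA : A = X.filter (fun σ => σ ⊆ W))
    (hAne : A.Nonempty)
    (hQ : ¬ Partitionable (X \ A))
    (N : ℕ) (hN : N > A.card)
    (φ : ℕ → V → V ⊕ (ℕ × V))
    (hφ : ∀ i v, φ i v = if v ∈ W then Sum.inl v else Sum.inr (i, v))
    (CN : Finset (Finset (V ⊕ (ℕ × V))))
    (hCN : CN = (Finset.Icc 1 N).biUnion (fun i => X.image (fun σ => σ.image (φ i)))) :
    ¬ Partitionable CN := by
  obtain rfl : φ = glueMap W := funext₂ hφ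
  subst hA hCN
  exact glued_complex_not_partitionable_general X W hQ (Finset.Icc 1 N) (by simpa using hN)
end

section
/- The simplicial complex C_3 obtained by gluing 3 disjoint copies of X̄ along A is not partitionable. -/
/-- The simplicial complex generated by a list of facets. -/
def gen (L : List (Finset ℕ)) : Finset (Finset ℕ) :=
  L.toFinset.biUnion Finset.powerset

/-- The simplicial complex `X̄` on vertices `{0,…,9}` with fourteen facets. -/
def Xbar : Finset (Finset ℕ) :=
  gen [{1,2,4,9},{1,2,6,9},{1,5,6,9},{1,5,8,9},{1,4,8,9},{1,4,5,8},{1,4,5,7},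
       {4,5,7,8},{1,2,5,6},{0,1,2,5},{0,2,5,6},{0,1,2,3},{1,2,3,4},{1,3,4,7}]

/-- The map on vertices defining the `i`-th copy of `X̄` in the glued complex `C_N`:
vertices of `A` (i.e. those in `{0,2,3,4,6,7,8}`) are fixed, and each vertex
`v ∈ {1,5,9}` is sent to `(i, v)`. -/
def glueVertex (i : ℕ) (v : ℕ) : ℕ ⊕ (ℕ × ℕ) :=
  if v = 1 ∨ v = 5 ∨ v = 9 then Sum.inr (i, v) else Sum.inl v

/-- The image `φ_i(σ)` of a face `σ` of `X̄` in the `i`-th copy of `X̄`. -/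
def phi (i : ℕ) (σ : Finset ℕ) : Finset (ℕ ⊕ (ℕ × ℕ)) :=
  σ.image (glueVertex i)

/-- The simplicial complex `C_N` obtained by gluing `N` disjoint copies of `X̄` along `A`. -/
def C (N : ℕ) : Finset (Finset (ℕ ⊕ (ℕ × ℕ))) :=
  (Finset.Icc 1 N).biUnion (fun i => Xbar.image (phi i))

/-!
A partitioning of a complex amounts to a map `f` sending each face to the facet whose interval
contains it. A facet of `C N` that contains the vertex `1`, `5` or `9` of the `i`-th copy lies in
that copy, so the values of `f` on faces with such a vertex are restricted by the facets of
`Xbar`. Looking at the four facets `1269`, `1256`, `0256`, `0125`, one finds that `f {2, 6}`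
contains the vertex `1` of the `i`-th copy unless `f {5}` contains `2`; by the automorphism
`(0 7)(2 4)(6 8)` of `Xbar`, also `f {4, 8}` contains that vertex unless `f {5}` contains `4`. No
facet contains `2`, `4` and `5`, so in every copy the vertex `1` lies in `f {2, 6}` or in
`f {4, 8}`. Since a facet meets only one of the copies of `1`, there are at most two copies.
-/

open Finset

section FacetAssignment

variable {V : Type*} [DecidableEq V] {Φ : Finset (Finset V)} {f : Finset V → Finset V}

theorem facets_subset (Φ : Finset (Finset V)) : facets Φ ⊆ Φ :=
  filter_subset _ _

/-- A partitioning, encoded by the map `f` sending each face to the facet whose interval contains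
it. The lower ends `R F` are not recorded; all that is kept of them is that the interval `[R F, F]`
contains every `ρ` with `σ ∩ τ ⊆ ρ ⊆ F` if it contains `σ` and `τ`. -/
structure IsFacetAssignment (Φ : Finset (Finset V)) (f : Finset V → Finset V) : Prop where
  apply_mem_facets : ∀ σ ∈ Φ, f σ ∈ facets Φ
  subset_apply : ∀ σ ∈ Φ, σ ⊆ f σ
  apply_eq : ∀ σ ∈ Φ, ∀ τ ∈ Φ, f σ = f τ → ∀ ρ, σ ∩ τ ⊆ ρ → ρ ⊆ f σ → f ρ = f σ

theorem Partitionable.exists_isFacetAssignment (h : Partitionable Φ) :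
    ∃ f, IsFacetAssignment Φ f := by
  obtain ⟨R, -, hmem, hpart⟩ := h
  choose! f hf using fun σ hσ => (hpart σ hσ).exists
  refine ⟨f, fun σ hσ => (hf σ hσ).1, fun σ hσ => (hf σ hσ).2.2, ?_⟩
  intro σ hσ τ hτ hστ ρ hρ hρσ
  have hR : R (f σ) ⊆ ρ := (subset_inter (hf σ hσ).2.1 (hστ ▸ (hf τ hτ).2.1)).trans hρ
  have hρΦ : ρ ∈ Φ := hmem _ (hf σ hσ).1 ρ hR hρσ
  exact (hpart ρ hρΦ).unique (hf ρ hρΦ) ⟨(hf σ hσ).1, hR, hρσ⟩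

/-- The facets of `Φ` containing `σ`, that is, the facets of the closed star of `σ`. -/
def starFacets (Φ : Finset (Finset V)) (σ : Finset V) : Finset (Finset V) :=
  (facets Φ).filter (σ ⊆ ·)

theorem mem_starFacets {σ F : Finset V} : F ∈ starFacets Φ σ ↔ F ∈ facets Φ ∧ σ ⊆ F :=
  mem_filter

theorem mem_of_starFacets_nonempty (hΦ : IsLowerSet (Φ : Set (Finset V))) {σ : Finset V}
    (h : (starFacets Φ σ).Nonempty) : σ ∈ Φ := by
  obtain ⟨F, hF⟩ := h
  obtain ⟨hFΦ, hσF⟩ := mem_starFacets.1 hF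
  exact hΦ hσF (facets_subset Φ hFΦ)

theorem IsFacetAssignment.apply_mem_starFacets (hf : IsFacetAssignment Φ f) {σ : Finset V}
    (hσ : σ ∈ Φ) : f σ ∈ starFacets Φ σ :=
  mem_starFacets.2 ⟨hf.apply_mem_facets σ hσ, hf.subset_apply σ hσ⟩

/-- The configuration formed in `Xbar` by the facets `1269`, `1256`, `0256`, `0125`, where
`(a, b, c, x, y, z) = (2, 6, 0, 1, 5, 9)`: the last three of them are the facets around the edge
`ay`, and the first shares the ridge `abx` with the second. -/
structure IsFan (Φ : Finset (Finset V)) (a b c x y z : V) : Prop where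
  nodup : [a, b, c, x, y, z].Nodup
  starFacets_abz : starFacets Φ {a, b, z} = {{a, b, x, z}}
  starFacets_abx : starFacets Φ {a, b, x} = {{a, b, x, z}, {a, b, x, y}}
  starFacets_bcy : starFacets Φ {b, c, y} = {{a, b, c, y}}
  starFacets_cxy : starFacets Φ {c, x, y} = {{a, c, x, y}}
  starFacets_ay : starFacets Φ {a, y} = {{a, b, x, y}, {a, b, c, y}, {a, c, x, y}}

namespace IsFan

variable {a b c x y z : V}

theorem mem_apply_ab_or_apply_abx_eq (h : IsFan Φ a b c x y z)
    (hΦ : IsLowerSet (Φ : Set (Finset V))) (hf : IsFacetAssignment Φ f) :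
    x ∈ f {a, b} ∨ f {a, b, x} = {a, b, x, y} := by
  have hxz : x ≠ z := by have := h.nodup; simp_all
  have abz_mem : {a, b, z} ∈ Φ := mem_of_starFacets_nonempty hΦ (by simp [h.starFacets_abz])
  have abx_mem : {a, b, x} ∈ Φ := mem_of_starFacets_nonempty hΦ (by simp [h.starFacets_abx])
  have f_abz : f {a, b, z} = {a, b, x, z} := by
    simpa [h.starFacets_abz] using hf.apply_mem_starFacets abz_mem
  have f_abx : f {a, b, x} = {a, b, x, z} ∨ f {a, b, x} = {a, b, x, y} := by
    simpa [h.starFacets_abx] using hf.apply_mem_starFacets abx_mem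
  refine f_abx.imp_left fun f_abx => ?_
  have f_ab : f {a, b} = f {a, b, z} :=
    hf.apply_eq _ abz_mem _ abx_mem (f_abz.trans f_abx.symm) _ (by grind) (by grind)
  simp [f_ab, f_abz]

theorem apply_ay_eq_or_mem_apply_y (h : IsFan Φ a b c x y z)
    (hΦ : IsLowerSet (Φ : Set (Finset V))) (hf : IsFacetAssignment Φ f) :
    f {a, y} = {a, b, x, y} ∨ a ∈ f {y} := by
  obtain ⟨hab, hac, hax⟩ : a ≠ b ∧ a ≠ c ∧ a ≠ x := by have := h.nodup; simp_all
  have bcy_mem : {b, c, y} ∈ Φ := mem_of_starFacets_nonempty hΦ (by simp [h.starFacets_bcy])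
  have cxy_mem : {c, x, y} ∈ Φ := mem_of_starFacets_nonempty hΦ (by simp [h.starFacets_cxy])
  have ay_mem : {a, y} ∈ Φ := mem_of_starFacets_nonempty hΦ (by simp [h.starFacets_ay])
  have f_bcy : f {b, c, y} = {a, b, c, y} := by
    simpa [h.starFacets_bcy] using hf.apply_mem_starFacets bcy_mem
  have f_cxy : f {c, x, y} = {a, c, x, y} := by
    simpa [h.starFacets_cxy] using hf.apply_mem_starFacets cxy_mem
  have f_ay : f {a, y} = {a, b, x, y} ∨ f {a, y} = {a, b, c, y} ∨ f {a, y} = {a, c, x, y} := by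
    simpa [h.starFacets_ay] using hf.apply_mem_starFacets ay_mem
  refine f_ay.imp_right ?_
  rintro (f_ay | f_ay)
  · have f_y : f {y} = f {b, c, y} :=
      hf.apply_eq _ bcy_mem _ ay_mem (f_bcy.trans f_ay.symm) _ (by grind) (by grind)
    simp [f_y, f_bcy]
  · have f_y : f {y} = f {c, x, y} :=
      hf.apply_eq _ cxy_mem _ ay_mem (f_cxy.trans f_ay.symm) _ (by grind) (by grind)
    simp [f_y, f_cxy]

theorem mem_apply_ab_or_mem_apply_y (h : IsFan Φ a b c x y z)
    (hΦ : IsLowerSet (Φ : Set (Finset V))) (hf : IsFacetAssignment Φ f) :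
    x ∈ f {a, b} ∨ a ∈ f {y} := by
  have hxy : x ≠ y := by have := h.nodup; simp_all
  obtain hx | f_abx := h.mem_apply_ab_or_apply_abx_eq hΦ hf
  · exact .inl hx
  obtain f_ay | ha := h.apply_ay_eq_or_mem_apply_y hΦ hf
  · have abx_mem : {a, b, x} ∈ Φ := mem_of_starFacets_nonempty hΦ (by simp [h.starFacets_abx])
    have ay_mem : {a, y} ∈ Φ := mem_of_starFacets_nonempty hΦ (by simp [h.starFacets_ay])
    have f_ab : f {a, b} = f {a, b, x} :=
      hf.apply_eq _ abx_mem _ ay_mem (f_abx.trans f_ay.symm) _ (by grind) (by grind)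
    simp [f_ab, f_abx]
  · exact .inr ha

end IsFan

end FacetAssignment

section Xbar

theorem isLowerSet_gen (L : List (Finset ℕ)) : IsLowerSet (gen L : Set (Finset ℕ)) := by
  intro σ τ hτσ hσ
  obtain ⟨G, hG, hσG⟩ := mem_biUnion.1 hσ
  exact mem_biUnion.2 ⟨G, hG, mem_powerset.2 (hτσ.trans (mem_powerset.1 hσG))⟩

theorem facets_Xbar : facets Xbar =
    {{1,2,4,9}, {1,2,6,9}, {1,5,6,9}, {1,5,8,9}, {1,4,8,9}, {1,4,5,8}, {1,4,5,7},
     {4,5,7,8}, {1,2,5,6}, {0,1,2,5}, {0,2,5,6}, {0,1,2,3}, {1,2,3,4}, {1,3,4,7}} := by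
  decide +kernel

theorem isFan_Xbar_two_six : IsFan Xbar 2 6 0 1 5 9 := by
  refine ⟨by decide, ?_, ?_, ?_, ?_, ?_⟩ <;> simp only [starFacets, facets_Xbar] <;> decide

theorem isFan_Xbar_four_eight : IsFan Xbar 4 8 7 1 5 9 := by
  refine ⟨by decide, ?_, ?_, ?_, ?_, ?_⟩ <;> simp only [starFacets, facets_Xbar] <;> decide

end Xbar

section Gluing

variable {N i j : ℕ} {σ τ : Finset ℕ}

theorem glueVertex_injective (i : ℕ) : Function.Injective (glueVertex i) := by
  intro v w h
  unfold glueVertex at h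
  split_ifs at h <;> simp_all

theorem eq_of_inr_mem_phi {v : ℕ} (h : Sum.inr (i, v) ∈ phi j σ) : i = j := by
  obtain ⟨w, -, hw⟩ := mem_image.1 h
  unfold glueVertex at hw
  split_ifs at hw
  simp_all

theorem phi_subset_phi_iff : phi i σ ⊆ phi i τ ↔ σ ⊆ τ :=
  image_subset_image_iff (glueVertex_injective i)

theorem phi_subset_phi_iff_eq_and_subset (hσ : (σ ∩ {1, 5, 9}).Nonempty) :
    phi i σ ⊆ phi j τ ↔ i = j ∧ σ ⊆ τ := by
  refine ⟨fun h => ?_, fun ⟨hij, hστ⟩ => hij ▸ phi_subset_phi_iff.2 hστ⟩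
  obtain ⟨v, hv⟩ := hσ
  obtain ⟨hvσ, hv⟩ := mem_inter.1 hv
  have hinr : glueVertex i v = Sum.inr (i, v) := if_pos (by simpa using hv)
  obtain rfl := eq_of_inr_mem_phi (hinr ▸ h (mem_image_of_mem _ hvσ))
  exact ⟨rfl, phi_subset_phi_iff.1 h⟩

theorem mem_C {F : Finset (ℕ ⊕ (ℕ × ℕ))} :
    F ∈ C N ↔ ∃ i ∈ Icc 1 N, ∃ σ ∈ Xbar, phi i σ = F := by
  simp only [C, mem_biUnion, mem_image]

theorem isLowerSet_C (N : ℕ) : IsLowerSet (C N : Set (Finset (ℕ ⊕ (ℕ × ℕ)))) := by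
  intro F F' hF' hF
  obtain ⟨i, hi, σ, hσ, rfl⟩ := mem_C.1 hF
  obtain ⟨τ, hτσ, rfl⟩ := subset_image_iff.1 hF'
  exact mem_C.2 ⟨i, hi, τ, isLowerSet_gen _ (coe_subset.1 hτσ) hσ, rfl⟩

theorem eq_of_inr_mem_of_mem_C {F : Finset (ℕ ⊕ (ℕ × ℕ))} (hF : F ∈ C N) {v w : ℕ}
    (hv : Sum.inr (i, v) ∈ F) (hw : Sum.inr (j, w) ∈ F) : i = j := by
  obtain ⟨k, -, σ, -, rfl⟩ := mem_C.1 hF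
  exact (eq_of_inr_mem_phi hv).trans (eq_of_inr_mem_phi hw).symm

theorem mem_facets_C {F : Finset (ℕ ⊕ (ℕ × ℕ))} :
    F ∈ facets (C N) ↔ ∃ i ∈ Icc 1 N, ∃ G ∈ facets Xbar, phi i G = F := by
  constructor
  · intro hF
    obtain ⟨hFC, hmax⟩ := mem_filter.1 hF
    obtain ⟨i, hi, G, hG, rfl⟩ := mem_C.1 hFC
    refine ⟨i, hi, G, mem_filter.2 ⟨hG, fun H hH hGH => ?_⟩, rfl⟩
    exact image_injective (glueVertex_injective i)
      (hmax _ (mem_C.2 ⟨i, hi, H, hH, rfl⟩) (phi_subset_phi_iff.2 hGH))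
  · rintro ⟨i, hi, G, hG, rfl⟩
    have hG159 : (G ∩ {1, 5, 9}).Nonempty := by
      rw [facets_Xbar] at hG
      revert G
      decide
    obtain ⟨hGX, hmax⟩ := mem_filter.1 hG
    refine mem_filter.2 ⟨mem_C.2 ⟨i, hi, G, hGX, rfl⟩, fun F hF hGF => ?_⟩
    obtain ⟨j, -, H, hH, rfl⟩ := mem_C.1 hF
    obtain ⟨rfl, hGH⟩ := (phi_subset_phi_iff_eq_and_subset hG159).1 hGF
    rw [hmax H hH hGH]

theorem starFacets_phi (hi : i ∈ Icc 1 N) (hσ : (σ ∩ {1, 5, 9}).Nonempty) :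
    starFacets (C N) (phi i σ) = (starFacets Xbar σ).image (phi i) := by
  ext F
  simp only [mem_starFacets, mem_facets_C, mem_image]
  constructor
  · rintro ⟨⟨j, -, G, hG, rfl⟩, hF⟩
    obtain ⟨rfl, hσG⟩ := (phi_subset_phi_iff_eq_and_subset hσ).1 hF
    exact ⟨G, ⟨hG, hσG⟩, rfl⟩
  · rintro ⟨G, ⟨hG, hσG⟩, rfl⟩
    exact ⟨⟨i, hi, G, hG, rfl⟩, phi_subset_phi_iff.2 hσG⟩

theorem IsFan.glue {a b c : ℕ} (h : IsFan Xbar a b c 1 5 9) (hi : i ∈ Icc 1 N) :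
    IsFan (C N) (glueVertex i a) (glueVertex i b) (glueVertex i c)
      (glueVertex i 1) (glueVertex i 5) (glueVertex i 9) where
  nodup := h.nodup.map (glueVertex_injective i)
  starFacets_abz := by
    simpa [h.starFacets_abz, phi, image_insert] using
      starFacets_phi hi (σ := {a, b, 9}) ⟨9, by simp⟩
  starFacets_abx := by
    simpa [h.starFacets_abx, phi, image_insert] using
      starFacets_phi hi (σ := {a, b, 1}) ⟨1, by simp⟩
  starFacets_bcy := by
    simpa [h.starFacets_bcy, phi, image_insert] using
      starFacets_phi hi (σ := {b, c, 5}) ⟨5, by simp⟩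
  starFacets_cxy := by
    simpa [h.starFacets_cxy, phi, image_insert] using
      starFacets_phi hi (σ := {c, 1, 5}) ⟨5, by simp⟩
  starFacets_ay := by
    simpa [h.starFacets_ay, phi, image_insert] using
      starFacets_phi hi (σ := {a, 5}) ⟨5, by simp⟩

/-- The edges `26` and `48` of `A`, as faces of `C N`. Every copy of `Xbar` contributes the facet
assigned to one of them. -/
def sharedEdges : Finset (Finset (ℕ ⊕ (ℕ × ℕ))) :=
  {{Sum.inl 2, Sum.inl 6}, {Sum.inl 4, Sum.inl 8}}

theorem sharedEdges_subset_C (hN : 1 ≤ N) : sharedEdges ⊆ C N := by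
  have hmem {e : Finset ℕ} (he : e ∈ Xbar) : phi 1 e ∈ C N :=
    mem_C.2 ⟨1, mem_Icc.2 ⟨le_rfl, hN⟩, e, he, rfl⟩
  have h26 : {2, 6} ∈ Xbar := by decide +kernel
  have h48 : {4, 8} ∈ Xbar := by decide +kernel
  exact insert_subset (hmem h26) (singleton_subset_iff.2 (hmem h48))

theorem exists_mem_sharedEdges_inr_one_mem_apply
    {f : Finset (ℕ ⊕ (ℕ × ℕ)) → Finset (ℕ ⊕ (ℕ × ℕ))}
    (hf : IsFacetAssignment (C N) f) (hi : i ∈ Icc 1 N) :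
    ∃ e ∈ sharedEdges, Sum.inr (i, 1) ∈ f e := by
  obtain h26 | h2 := (isFan_Xbar_two_six.glue hi).mem_apply_ab_or_mem_apply_y (isLowerSet_C N) hf
  · exact ⟨_, mem_insert_self _ _, h26⟩
  obtain h48 | h4 := (isFan_Xbar_four_eight.glue hi).mem_apply_ab_or_mem_apply_y (isLowerSet_C N) hf
  · exact ⟨_, mem_insert_of_mem (mem_singleton_self _), h48⟩
  have h5 : phi i {5} ∈ C N := mem_C.2 ⟨i, hi, {5}, by decide +kernel, rfl⟩
  have hstar := hf.apply_mem_starFacets h5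
  rw [starFacets_phi hi ⟨5, by simp⟩] at hstar
  obtain ⟨G, hG, hfG : phi i G = f {glueVertex i 5}⟩ := mem_image.1 hstar
  rw [← hfG] at h2 h4
  have h2G : 2 ∈ G := (glueVertex_injective i).mem_finset_image.1 h2
  have h4G : 4 ∈ G := (glueVertex_injective i).mem_finset_image.1 h4
  have no_facet : ∀ G ∈ starFacets Xbar {5}, 2 ∈ G → 4 ∉ G := by
    simp only [starFacets, facets_Xbar]
    decide
  exact absurd h4G (no_facet G hG h2G)

end Gluing

theorem C3_not_partitionable_general {N : ℕ} (hN : 3 ≤ N) : ¬ Partitionable (C N) := by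
  intro h
  obtain ⟨f, hf⟩ := h.exists_isFacetAssignment
  choose! e heE hfe using fun i (hi : i ∈ Icc 1 N) =>
    exists_mem_sharedEdges_inr_one_mem_apply hf hi
  have hcard : #sharedEdges < #(Icc 1 N) := by
    rw [Nat.card_Icc, Nat.add_sub_cancel]
    exact card_le_two.trans_lt hN
  obtain ⟨i, hi, j, hj, hij, hedge⟩ := exists_ne_map_eq_of_card_lt_of_maps_to hcard heE
  have heC : e i ∈ C N := sharedEdges_subset_C (by lia) (heE i hi)
  have hfC : f (e i) ∈ C N := facets_subset _ (hf.apply_mem_facets _ heC)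
  exact hij (eq_of_inr_mem_of_mem_C hfC (hfe i hi) (hedge ▸ hfe j hj))

/-- The simplicial complex `C_3` obtained by gluing 3 disjoint copies of `X̄` along `A`
is not partitionable. -/
theorem C3_not_partitionable : ¬ Partitionable (C 3) :=
  C3_not_partitionable_general le_rfl
end

section
/- The simplicial complex C_2 obtained by gluing 2 disjoint copies of X̄ along A is partitionable. -/
/-!
Every face of `A` lies in both copies of `X̄` in `C_2`, and every other face of a copy lies in that
copy only. So a partitioning of `C_2` arises by handing each face of `A` over to one of the copies
and partitioning, for each copy, the family of its faces outside `A` together with the faces of `A`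
it received. No facet of `X̄` lies in `A`, so the tops of the resulting intervals are facets of
`C_2`. Suitable partitionings exist if the first copy receives the eight faces of `A` that contain
`7` or `8`, and the second copy the sixteen others.
-/

section Partitionable

open Finset

variable {V W ι : Type*} [DecidableEq V] [DecidableEq W]

theorem mem_facets_iff_maximal {Φ : Finset (Finset V)} {F : Finset V} :
    F ∈ facets Φ ↔ Maximal (· ∈ Φ) F := by
  simp only [facets, mem_filter, maximal_iff]

theorem partitionable_of_intervals {Φ : Finset (Finset V)} {R F : ι → Finset V}
    (hF : ∀ i j, F i ⊆ F j → i = j) (hRF : ∀ i, R i ⊆ F i)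
    (hsub : ∀ i, Icc (R i) (F i) ⊆ Φ) (hcover : ∀ σ ∈ Φ, ∃! i, σ ∈ Icc (R i) (F i)) :
    Partitionable Φ := by
  simp only [mem_Icc] at hcover
  have hFΦ (i : ι) : F i ∈ Φ := hsub i (right_mem_Icc.2 (hRF i))
  have hinj : Function.Injective F := fun i j h ↦ hF i j h.subset
  have hfacets (G : Finset V) : G ∈ facets Φ ↔ ∃ i, F i = G := by
    rw [mem_facets_iff_maximal]
    constructor
    · intro hG
      obtain ⟨i, ⟨-, hGi⟩, -⟩ := hcover G hG.prop
      exact ⟨i, (hG.eq_of_le (hFΦ i) hGi).symm⟩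
    · rintro ⟨i, rfl⟩
      refine ⟨hFΦ i, fun H hH hiH ↦ ?_⟩
      obtain ⟨j, ⟨-, hHj⟩, -⟩ := hcover H hH
      rwa [hF i j (hiH.trans hHj)]
  simp only [Partitionable, hfacets, forall_exists_index, forall_apply_eq_imp_iff]
  refine ⟨Function.extend F R fun _ ↦ ∅, fun i ↦ ?_, fun i σ hRσ hσF ↦ ?_, fun σ hσ ↦ ?_⟩
  · simpa only [hinj.extend_apply] using hRF i
  · rw [hinj.extend_apply] at hRσ
    exact hsub i (mem_Icc.2 ⟨hRσ, hσF⟩)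
  · obtain ⟨i, hi, huniq⟩ := hcover σ hσ
    refine ⟨F i, ⟨⟨i, rfl⟩, by simpa only [hinj.extend_apply] using hi⟩, ?_⟩
    rintro _ ⟨⟨j, rfl⟩, hj⟩
    rw [hinj.extend_apply] at hj
    rw [huniq j hj]

theorem Partitionable.image {Φ : Finset (Finset V)} (hΦ : Partitionable Φ) {f : V → W}
    (hf : Function.Injective f) : Partitionable (Φ.image (Finset.image f)) := by
  obtain ⟨R, hRF, hsub, hcover⟩ := hΦ
  refine partitionable_of_intervals (ι := facets Φ) (F := fun G ↦ G.1.image f)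
    (R := fun G ↦ (R G).image f) (fun G H hGH ↦ ?_) (fun G ↦ image_subset_image (hRF G G.2))
    (fun G σ hσ ↦ ?_) (fun σ hσ ↦ ?_)
  · exact Subtype.ext ((mem_facets_iff_maximal.1 G.2).eq_of_le
      (mem_facets_iff_maximal.1 H.2).prop ((image_subset_image_iff hf).1 hGH))
  · obtain ⟨hRσ, hσG⟩ := mem_Icc.1 hσ
    obtain ⟨τ, hτG, rfl⟩ := subset_image_iff.1 hσG
    exact mem_image_of_mem _ (hsub G G.2 τ ((image_subset_image_iff hf).1 hRσ) (mod_cast hτG))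
  · obtain ⟨τ, hτ, rfl⟩ := mem_image.1 hσ
    obtain ⟨G, ⟨hG, hGτ⟩, huniq⟩ := hcover τ hτ
    simp only [mem_Icc, image_subset_image_iff hf]
    exact ⟨⟨G, hG⟩, hGτ, fun H hH ↦ Subtype.ext (huniq H ⟨H.2, hH⟩)⟩

theorem partitionable_biUnion {s : Finset ι} {Φ : ι → Finset (Finset V)}
    (hΦ : ∀ i ∈ s, Partitionable (Φ i)) (hdisj : (s : Set ι).PairwiseDisjoint Φ)
    (hfacets : ∀ i ∈ s, facets (Φ i) ⊆ facets (s.biUnion Φ)) :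
    Partitionable (s.biUnion Φ) := by
  choose! R hRF hsub hcover using hΦ
  have hmem {i : ι} (hi : i ∈ s) {σ : Finset V} (hσ : σ ∈ Φ i) : σ ∈ s.biUnion Φ :=
    mem_biUnion.2 ⟨i, hi, hσ⟩
  have hfacet_mem {i : ι} {G : Finset V} (hG : G ∈ facets (Φ i)) : G ∈ Φ i :=
    (mem_facets_iff_maximal.1 hG).prop
  refine partitionable_of_intervals (ι := {p : ι × Finset V // p.1 ∈ s ∧ p.2 ∈ facets (Φ p.1)})
    (F := fun p ↦ p.1.2) (R := fun p ↦ R p.1.1 p.1.2) ?_ (fun p ↦ hRF _ p.2.1 _ p.2.2) ?_ ?_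
  · rintro ⟨⟨i, G⟩, hi, hG⟩ ⟨⟨j, H⟩, hj, hH⟩ (hGH : G ⊆ H)
    obtain rfl : G = H := (mem_facets_iff_maximal.1 (hfacets i hi hG)).eq_of_le
      (hmem hj (hfacet_mem hH)) hGH
    obtain rfl : i = j := hdisj.elim_finset hi hj G (hfacet_mem hG) (hfacet_mem hH)
    rfl
  · rintro ⟨⟨i, G⟩, hi, hG⟩ σ hσ
    obtain ⟨hRσ, hσG⟩ := mem_Icc.1 hσ
    exact hmem hi (hsub i hi G hG σ hRσ hσG)
  · intro σ hσ
    obtain ⟨i, hi, hσi⟩ := mem_biUnion.1 hσ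
    obtain ⟨G, ⟨hG, hRσ, hσG⟩, huniq⟩ := hcover i hi σ hσi
    refine ⟨⟨(i, G), hi, hG⟩, mem_Icc.2 ⟨hRσ, hσG⟩, ?_⟩
    rintro ⟨⟨j, H⟩, hj, hH⟩ hσH
    obtain ⟨hRσ', hσH'⟩ := mem_Icc.1 hσH
    obtain rfl : j = i := hdisj.elim_finset hj hi σ (hsub j hj H hH σ hRσ' hσH') hσi
    obtain rfl : H = G := huniq H ⟨hH, hRσ', hσH'⟩
    rfl

end Partitionable

section Gluing

open Finset

/-- The vertices of `X̄` outside `A`, those that the copies of `X̄` in `C_N` do not share. As `A` is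
an induced subcomplex, its faces are the faces of `X̄` disjoint from this set. -/
def privateVertices : Finset ℕ := {1, 5, 9}

theorem leftInverse_glueVertex (i : ℕ) :
    Function.LeftInverse (Sum.elim id Prod.snd) (glueVertex i) := by
  intro v
  unfold glueVertex
  split_ifs <;> rfl

theorem subset_of_phi_subset_phi {i j : ℕ} {σ τ : Finset ℕ} (h : phi i σ ⊆ phi j τ) : σ ⊆ τ := by
  have hproj := image_subset_image (f := Sum.elim id Prod.snd) h
  simpa only [phi, image_image, (leftInverse_glueVertex _).comp_eq_id, image_id] using hproj

theorem eq_of_phi_subset_phi {i j : ℕ} {σ τ : Finset ℕ} (h : phi i σ ⊆ phi j τ)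
    (hσ : ¬Disjoint σ privateVertices) : i = j := by
  obtain ⟨v, hvσ, hv⟩ := not_disjoint_iff.1 hσ
  obtain ⟨w, -, hw⟩ := mem_image.1 (h (mem_image_of_mem _ hvσ))
  have hv' : glueVertex i v = Sum.inr (i, v) := if_pos (by simpa [privateVertices] using hv)
  rw [hv', glueVertex] at hw
  split_ifs at hw
  exact (congrArg Prod.fst (Sum.inr.inj hw)).symm

theorem phi_eq_phi_of_disjoint {σ : Finset ℕ} (hσ : Disjoint σ privateVertices) (i j : ℕ) :
    phi i σ = phi j σ := by
  refine image_congr fun v hv ↦ ?_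
  have hv' : ¬(v = 1 ∨ v = 5 ∨ v = 9) := by
    simpa [privateVertices] using disjoint_left.1 hσ hv
  simp only [glueVertex, if_neg hv']

/-- The facets of `X̄`. -/
def xbarFacet : Fin 14 → Finset ℕ :=
  ![{1, 2, 4, 9}, {1, 2, 6, 9}, {1, 5, 6, 9}, {1, 5, 8, 9}, {1, 4, 8, 9}, {1, 4, 5, 8},
    {1, 4, 5, 7}, {4, 5, 7, 8}, {1, 2, 5, 6}, {0, 1, 2, 5}, {0, 2, 5, 6}, {0, 1, 2, 3},
    {1, 2, 3, 4}, {1, 3, 4, 7}]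

theorem mem_Xbar_iff {σ : Finset ℕ} : σ ∈ Xbar ↔ ∃ k, σ ⊆ xbarFacet k := by
  simp [Xbar, gen, xbarFacet, Fin.exists_fin_succ]

theorem eq_of_xbarFacet_subset : ∀ k l, xbarFacet k ⊆ xbarFacet l → k = l := by
  decide +kernel

theorem not_disjoint_xbarFacet : ∀ k, ¬Disjoint (xbarFacet k) privateVertices := by
  decide +kernel

/-- The share of the `i`-th copy of `X̄` when each face `σ` of `A` is handed over to the copy
numbered `c σ`: the faces of `X̄` outside `A` and those faces of `A` that go to the copy `i`.
The values of `c` outside `A` do not matter. -/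
def share (c : Finset ℕ → ℕ) (i : ℕ) : Finset (Finset ℕ) :=
  {σ ∈ Xbar | Disjoint σ privateVertices → c σ = i}

variable {c : Finset ℕ → ℕ} {N : ℕ}

theorem C_eq_biUnion_share
    (hc : ∀ σ ∈ Xbar, Disjoint σ privateVertices → c σ ∈ Icc 1 N) :
    C N = (Icc 1 N).biUnion fun i ↦ (share c i).image (phi i) := by
  refine Subset.antisymm (fun ρ hρ ↦ ?_)
    (biUnion_mono fun i _ ↦ image_subset_image (filter_subset _ _))
  simp only [C, mem_biUnion, mem_image] at hρ ⊢
  obtain ⟨i, hi, σ, hσ, rfl⟩ := hρ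
  by_cases hA : Disjoint σ privateVertices
  · exact ⟨c σ, hc σ hσ hA, σ, mem_filter.2 ⟨hσ, fun _ ↦ rfl⟩, phi_eq_phi_of_disjoint hA _ _⟩
  · exact ⟨i, hi, σ, mem_filter.2 ⟨hσ, fun h ↦ absurd h hA⟩, rfl⟩

theorem pairwise_disjoint_image_share :
    Pairwise (Function.onFun Disjoint fun i ↦ (share c i).image (phi i)) := by
  intro i j hij
  refine disjoint_left.2 fun ρ hi hj ↦ hij ?_
  obtain ⟨σ, hσ, rfl⟩ := mem_image.1 hi
  obtain ⟨τ, hτ, hτσ⟩ := mem_image.1 hj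
  obtain rfl : σ = τ :=
    (subset_of_phi_subset_phi hτσ.superset).antisymm (subset_of_phi_subset_phi hτσ.subset)
  by_cases hA : Disjoint σ privateVertices
  · exact ((mem_filter.1 hσ).2 hA).symm.trans ((mem_filter.1 hτ).2 hA)
  · exact eq_of_phi_subset_phi hτσ.superset hA

theorem not_disjoint_of_maximal_share {i : ℕ} {F : Finset ℕ} (hF : Maximal (· ∈ share c i) F) :
    ¬Disjoint F privateVertices := by
  obtain ⟨k, hk⟩ := mem_Xbar_iff.1 (mem_filter.1 hF.prop).1
  have hshare : xbarFacet k ∈ share c i :=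
    mem_filter.2 ⟨mem_Xbar_iff.2 ⟨k, Subset.rfl⟩, fun h ↦ absurd h (not_disjoint_xbarFacet k)⟩
  rw [hF.eq_of_le hshare hk]
  exact not_disjoint_xbarFacet k

theorem facets_image_share_subset {i : ℕ} (hi : i ∈ Icc 1 N) :
    facets ((share c i).image (phi i)) ⊆
      facets ((Icc 1 N).biUnion fun j ↦ (share c j).image (phi j)) := by
  intro ρ hρ
  rw [mem_facets_iff_maximal] at hρ ⊢
  obtain ⟨F, hF, rfl⟩ := mem_image.1 hρ.prop
  have hFmax : Maximal (· ∈ share c i) F := ⟨hF, fun G hG hFG ↦ subset_of_phi_subset_phi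
    (hρ.le_of_ge (mem_image_of_mem _ hG) (image_subset_image hFG))⟩
  refine ⟨mem_biUnion.2 ⟨i, hi, hρ.prop⟩, fun τ hτ hFτ ↦ ?_⟩
  obtain ⟨j, -, hτj⟩ := mem_biUnion.1 hτ
  obtain ⟨G, -, rfl⟩ := mem_image.1 hτj
  obtain rfl : i = j := eq_of_phi_subset_phi hFτ (not_disjoint_of_maximal_share hFmax)
  exact hρ.le_of_ge hτj hFτ

theorem partitionable_C_of_share
    (hc : ∀ σ ∈ Xbar, Disjoint σ privateVertices → c σ ∈ Icc 1 N)
    (hshare : ∀ i ∈ Icc 1 N, Partitionable (share c i)) : Partitionable (C N) := by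
  rw [C_eq_biUnion_share hc]
  exact partitionable_biUnion
    (fun i hi ↦ (hshare i hi).image (leftInverse_glueVertex i).injective)
    (pairwise_disjoint_image_share.set_pairwise _) fun _ ↦ facets_image_share_subset

end Gluing

/-- The distribution of the faces of `A` used for `C_2`: the faces containing `7` or `8` go to the
first copy of `X̄`, the others to the second. -/
def copyOf (σ : Finset ℕ) : ℕ :=
  if Disjoint σ {7, 8} then 2 else 1

theorem partitionable_share_copyOf_one : Partitionable (share copyOf 1) := by
  refine partitionable_of_intervals (F := xbarFacet)
    (R := ![{9}, {6, 9}, {5, 9}, {5, 8}, {8}, {4, 5}, {7}, {7, 8}, {1, 6}, {1, 5}, {5}, {0, 1},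
      {1}, {3, 7}]) eq_of_xbarFacet_subset (by decide +kernel) (by decide +kernel) ?_
  unfold ExistsUnique
  decide +kernel

theorem partitionable_share_copyOf_two : Partitionable (share copyOf 2) := by
  refine partitionable_of_intervals (F := xbarFacet)
    (R := ![∅, {2, 6}, {6}, {5, 9}, {8, 9}, {1, 8}, {5}, {5, 8}, {2, 5}, {0, 1}, {0}, {0, 3},
      {3}, {1, 7}]) eq_of_xbarFacet_subset (by decide +kernel) (by decide +kernel) ?_
  unfold ExistsUnique
  decide +kernel

/-- The simplicial complex `C_2` obtained by gluing 2 disjoint copies of `X̄` along `A`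
is partitionable. -/
theorem C2_partitionable : Partitionable (C 2) := by
  refine partitionable_C_of_share (c := copyOf) (fun σ _ _ ↦ ?_) fun i hi ↦ ?_
  · unfold copyOf
    split_ifs <;> decide
  · obtain rfl | rfl : i = 1 ∨ i = 2 := by
      rw [Finset.mem_Icc] at hi
      omega
    · exact partitionable_share_copyOf_one
    · exact partitionable_share_copyOf_two
end

section
/- The relative simplicial complex Q′ = X′ ∖ A′ is not partitionable, where X′ is the simplicial complex on vertices {1,4,5,7,8,9} generated by the facets 1589, 1489, 1458, 1457, 4578, and A′ is the subcomplex of X′ generated by the facets 489, 589, 578, 157. -/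
/-- The simplicial complex `X′` on vertices `{1,4,5,7,8,9}` with five facets. -/
def X' : Finset (Finset ℕ) :=
  gen [{1,5,8,9},{1,4,8,9},{1,4,5,8},{1,4,5,7},{4,5,7,8}]

/-- The subcomplex `A′` of `X′`, generated by the triangles 489, 589, 578, 157. -/
def A' : Finset (Finset ℕ) :=
  gen [{4,8,9},{5,8,9},{5,7,8},{1,5,7}]

section IntervalCover

variable {V : Type*} [DecidableEq V] {Φ : Finset (Finset V)} {R : Finset V → Finset V}
  {F σ τ : Finset V}

/-- The intervals `[R F, F]`, one for each facet `F` of `Φ`, have union `Φ`: a partitioning in which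
the intervals may overlap. -/
def IsIntervalCover (Φ : Finset (Finset V)) (R : Finset V → Finset V) : Prop :=
  (facets Φ).biUnion (fun F => Finset.Icc (R F) F) = Φ

/-- `σ` is a free face of `F` in the relative complex `Φ`: the only facet containing it is `F`.
Unlike in collapsing theory, `σ = F` is allowed. -/
def IsFreeFace (Φ : Finset (Finset V)) (σ F : Finset V) : Prop :=
  σ ∈ Φ ∧ {G ∈ facets Φ | σ ⊆ G} = {F}

instance : Decidable (IsFreeFace Φ σ F) :=
  inferInstanceAs (Decidable (_ ∧ _))

theorem Partitionable.exists_isIntervalCover (hΦ : Partitionable Φ) :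
    ∃ R, IsIntervalCover Φ R := by
  obtain ⟨R, -, hmem, hcover⟩ := hΦ
  refine ⟨R, Finset.ext fun σ => ?_⟩
  simp only [Finset.mem_biUnion, Finset.mem_Icc]
  exact ⟨fun ⟨F, hF, hRσ, hσF⟩ => hmem F hF σ hRσ hσF, fun hσ => (hcover σ hσ).exists⟩

namespace IsIntervalCover

theorem mem_iff_exists_facet (h : IsIntervalCover Φ R) :
    σ ∈ Φ ↔ ∃ F ∈ facets Φ, R F ⊆ σ ∧ σ ⊆ F := by
  conv_lhs => rw [← h]
  simp only [Finset.mem_biUnion, Finset.mem_Icc]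

theorem inter_mem (h : IsIntervalCover Φ R) (hF : F ∈ facets Φ) (hσF : σ ⊆ F)
    (hσ : R F ⊆ σ) (hτ : R F ⊆ τ) : σ ∩ τ ∈ Φ :=
  h.mem_iff_exists_facet.2 ⟨F, hF, Finset.subset_inter hσ hτ, Finset.inter_subset_left.trans hσF⟩

theorem subset_of_isFreeFace (h : IsIntervalCover Φ R) (hσ : IsFreeFace Φ σ F) : R F ⊆ σ := by
  obtain ⟨G, hG, hRσ, hσG⟩ := h.mem_iff_exists_facet.1 hσ.1
  have hGF : G = F := Finset.mem_singleton.1 (hσ.2 ▸ Finset.mem_filter.2 ⟨hG, hσG⟩)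
  exact hGF ▸ hRσ

theorem subset_of_forall_exists_isFreeFace (h : IsIntervalCover Φ R) (hτ : τ ∈ Φ)
    (hfree : ∀ G ∈ facets Φ, τ ⊆ G → G ≠ F → ∃ σ, IsFreeFace Φ σ G ∧ τ ∩ σ ∉ Φ) :
    R F ⊆ τ := by
  obtain ⟨G, hG, hRτ, hτG⟩ := h.mem_iff_exists_facet.1 hτ
  by_cases hGF : G = F
  · exact hGF ▸ hRτ
  · obtain ⟨σ, hσ, hτσ⟩ := hfree G hG hτG hGF
    exact absurd (h.inter_mem hG hτG hRτ (h.subset_of_isFreeFace hσ)) hτσ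

end IsIntervalCover

end IntervalCover

theorem facets_Q' : facets (X' \ A') =
    {{1,5,8,9},{1,4,8,9},{1,4,5,8},{1,4,5,7},{4,5,7,8}} := by
  decide +kernel

theorem exists_isFreeFace_inter_edge_18_notMem :
    ∀ G ∈ facets (X' \ A'), {1,8} ⊆ G → G ≠ {1,4,5,8} →
      ∃ σ, IsFreeFace (X' \ A') σ G ∧ {1,8} ∩ σ ∉ X' \ A' := by
  simp only [facets_Q', Finset.mem_insert, Finset.mem_singleton, forall_eq_or_imp, forall_eq]
  exact ⟨fun _ _ => ⟨{1,5,9}, by decide +kernel, by decide +kernel⟩,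
    fun _ _ => ⟨{1,4,9}, by decide +kernel, by decide +kernel⟩,
    fun _ hne => absurd rfl hne,
    fun hsub => absurd hsub (by decide),
    fun hsub => absurd hsub (by decide)⟩

theorem exists_isFreeFace_inter_edge_45_notMem :
    ∀ G ∈ facets (X' \ A'), {4,5} ⊆ G → G ≠ {1,4,5,8} →
      ∃ σ, IsFreeFace (X' \ A') σ G ∧ {4,5} ∩ σ ∉ X' \ A' := by
  simp only [facets_Q', Finset.mem_insert, Finset.mem_singleton, forall_eq_or_imp, forall_eq]
  exact ⟨fun hsub => absurd hsub (by decide),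
    fun hsub => absurd hsub (by decide),
    fun _ hne => absurd rfl hne,
    fun _ _ => ⟨{1,4,7}, by decide +kernel, by decide +kernel⟩,
    fun _ _ => ⟨{4,7,8}, by decide +kernel, by decide +kernel⟩⟩

theorem Q'_not_partitionable_general (R : Finset ℕ → Finset ℕ) :
    ¬ IsIntervalCover (X' \ A') R := by
  intro h
  have h18 : R {1,4,5,8} ⊆ {1,8} :=
    h.subset_of_forall_exists_isFreeFace (by decide +kernel) exists_isFreeFace_inter_edge_18_notMem
  have h45 : R {1,4,5,8} ⊆ {4,5} :=
    h.subset_of_forall_exists_isFreeFace (by decide +kernel) exists_isFreeFace_inter_edge_45_notMem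
  have hfacet : {1,4,5,8} ∈ facets (X' \ A') := by simp [facets_Q']
  have hempty : {1,8} ∩ {4,5} ∈ X' \ A' := h.inter_mem hfacet (by decide) h18 h45
  exact absurd hempty (by decide +kernel)

/-- The relative simplicial complex `Q′ = X′ ∖ A′` is not partitionable. -/
theorem Q'_not_partitionable : ¬ Partitionable (X' \ A') := fun hQ =>
  let ⟨R, hR⟩ := hQ.exists_isIntervalCover
  Q'_not_partitionable_general R hR
end

section
/- The ordering 0237, 0267, 2367, 2368, 2348, 3678, 3478 of the facets of B is a shelling of B; in particular B is shellable. -/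
/-- A list `L = [F_1, …, F_n]` is a shelling of the pure simplicial complex `Δ` if it is
an ordering of the facets of `Δ` without repetition such that for every `j`, the set
`{σ ⊆ F_j : σ ⊄ F_i for all i < j}` has a unique minimal element `R_j` (equivalently,
a minimum element `R_j`). -/
def IsShelling {V : Type*} [DecidableEq V] (Δ : Finset (Finset V)) (L : List (Finset V)) :
    Prop :=
  L.Nodup ∧ (∀ F, F ∈ L ↔ F ∈ facets Δ) ∧
    ∀ j : Fin L.length, ∃ R : Finset V,
      (R ⊆ L.get j ∧ ∀ i : Fin L.length, i < j → ¬ R ⊆ L.get i) ∧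
      (∀ σ : Finset V, σ ⊆ L.get j → (∀ i : Fin L.length, i < j → ¬ σ ⊆ L.get i) → R ⊆ σ)

/-- A pure simplicial complex is shellable if it admits a shelling. -/
def Shellable {V : Type*} [DecidableEq V] (Δ : Finset (Finset V)) : Prop :=
  ∃ L : List (Finset V), IsShelling Δ L

/-- The simplicial complex `B` on vertices `{0,2,3,4,6,7,8}` with seven facets
(the induced subcomplex of Ziegler's nonshellable 3-ball `Z` on `{0,2,3,4,6,7,8}`). -/
def B : Finset (Finset ℕ) :=
  gen [{0,2,3,7},{0,2,6,7},{2,3,6,7},{2,3,6,8},{2,3,4,8},{3,6,7,8},{3,4,7,8}]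

/-!
For an ordered list of facets `F_1, …, F_n`, let `R(F_j)` be the set of vertices `v ∈ F_j` such that
`F_j \ {v}` lies in an earlier facet. A face of `F_j` that lies in no earlier facet must contain
every such vertex, so the ordering is a shelling as soon as `R(F_j)` itself lies in no earlier
facet. The generators of `B` all have four vertices, so none contains another and they are its
facets; for them the condition is checked on the table of the seven sets `R(F_j)`.
-/

theorem facets_biUnion_powerset {V : Type*} [DecidableEq V] {S : Finset (Finset V)}
    (hS : IsAntichain (· ⊆ ·) (S : Set (Finset V))) :
    facets (S.biUnion Finset.powerset) = S := by
  ext F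
  simp only [facets, Finset.mem_filter, Finset.mem_biUnion, Finset.mem_powerset]
  constructor
  · rintro ⟨⟨G, hG, hFG⟩, hmax⟩
    exact hmax G ⟨G, hG, subset_rfl⟩ hFG ▸ hG
  · refine fun hF => ⟨⟨F, hF, subset_rfl⟩, ?_⟩
    rintro G ⟨H, hH, hGH⟩ hFG
    have hFH : F = H := hS.eq hF hH (hFG.trans hGH)
    exact hFG.antisymm (hFH ▸ hGH)

section Restriction

variable {V : Type*} [DecidableEq V]

/-- The restriction `R(F_j)` of the `j`-th facet in an ordering `L = [F_1, …, F_n]`: the vertices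
of `F_j` whose opposite ridge already lies in an earlier facet. In a shelling it is the minimum
new face contributed by `F_j`. -/
def restriction (L : List (Finset V)) (j : Fin L.length) : Finset V :=
  (L.get j).filter fun v => ∃ i < j, (L.get j).erase v ⊆ L.get i

theorem restriction_subset_get (L : List (Finset V)) (j : Fin L.length) :
    restriction L j ⊆ L.get j :=
  Finset.filter_subset _ _

theorem restriction_subset_of_forall_not_subset {L : List (Finset V)} {j : Fin L.length}
    {σ : Finset V} (hσ : σ ⊆ L.get j) (hnew : ∀ i < j, ¬ σ ⊆ L.get i) :
    restriction L j ⊆ σ := by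
  intro v hv
  obtain ⟨i, hij, hridge⟩ := (Finset.mem_filter.mp hv).2
  by_contra hvσ
  exact hnew i hij ((Finset.subset_erase.mpr ⟨hσ, hvσ⟩).trans hridge)

theorem isShelling_of_restriction_not_subset {Δ : Finset (Finset V)} {L : List (Finset V)}
    (hnodup : L.Nodup) (hfacets : facets Δ = L.toFinset)
    (hnew : ∀ i j : Fin L.length, i < j → ¬ restriction L j ⊆ L.get i) : IsShelling Δ L :=
  ⟨hnodup, fun F => by rw [hfacets, List.mem_toFinset], fun j =>
    ⟨restriction L j, ⟨restriction_subset_get L j, fun i => hnew i j⟩,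
      fun _ => restriction_subset_of_forall_not_subset⟩⟩

end Restriction

/-- The order in which the facets of `B` are shelled. -/
abbrev facetOrderB : List (Finset ℕ) :=
  [{0,2,3,7},{0,2,6,7},{2,3,6,7},{2,3,6,8},{2,3,4,8},{3,6,7,8},{3,4,7,8}]

theorem facets_B : facets B = facetOrderB.toFinset := by
  have hpure : (facetOrderB.toFinset : Set (Finset ℕ)).Sized 4 := by
    have hcard : ∀ F ∈ facetOrderB, F.card = 4 := by decide
    exact fun F hF => hcard F (List.mem_toFinset.mp hF)
  exact facets_biUnion_powerset hpure.isAntichain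

theorem restriction_facetOrderB (j : Fin facetOrderB.length) :
    restriction facetOrderB j = ![∅, {6}, {3, 6}, {8}, {4}, {7, 8}, {4, 7}] j := by
  revert j
  decide

theorem restriction_facetOrderB_not_subset {i j : Fin facetOrderB.length} (hij : i < j) :
    ¬ restriction facetOrderB j ⊆ facetOrderB.get i := by
  rw [restriction_facetOrderB]
  revert i j
  decide

/-- The ordering 0237, 0267, 2367, 2368, 2348, 3678, 3478 of the facets of `B` is a
shelling; in particular `B` is shellable. -/
theorem B_shelling :
    IsShelling B [{0,2,3,7},{0,2,6,7},{2,3,6,7},{2,3,6,8},{2,3,4,8},{3,6,7,8},{3,4,7,8}] ∧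
      Shellable B := by
  have hB : IsShelling B facetOrderB :=
    isShelling_of_restriction_not_subset (by decide) facets_B
      fun _ _ => restriction_facetOrderB_not_subset
  exact ⟨hB, facetOrderB, hB⟩
end

section
/- The permutation τ = (0 7)(2 4)(6 8) of {0,1,…,9} (the product of the three transpositions swapping 0 ↔ 7, 2 ↔ 4, and 6 ↔ 8, fixing the other vertices) is a simplicial automorphism of X̄: for every finite subset σ of {0,1,…,9}, σ is a face of X̄ if and only if τ(σ) = {τ(v) : v ∈ σ} is a face of X̄. Moreover τ maps A to A, and hence maps the relative complex Q = X̄ ∖ A to itself. -/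
/-- The subcomplex `A` of `X̄`, generated by five triangles. -/
def Acx : Finset (Finset ℕ) :=
  gen [{0,2,6},{0,2,3},{2,3,4},{3,4,7},{4,7,8}]

/-- The permutation `τ = (0 7)(2 4)(6 8)` of the vertices, fixing all other vertices. -/
def tau : ℕ → ℕ := fun v =>
  if v = 0 then 7 else if v = 7 then 0 else
  if v = 2 then 4 else if v = 4 then 2 else
  if v = 6 then 8 else if v = 8 then 6 else v

theorem mem_gen {L : List (Finset ℕ)} {σ : Finset ℕ} : σ ∈ gen L ↔ ∃ F ∈ L, σ ⊆ F := by
  simp [gen]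

theorem mem_gen_iff_image_mem_gen {L : List (Finset ℕ)} {f : ℕ → ℕ}
    (hf : Function.Injective f) (hL : ∀ F ∈ L, F.image f ∈ L) (σ : Finset ℕ) :
    σ ∈ gen L ↔ σ.image f ∈ gen L := by
  rw [mem_gen, mem_gen]
  constructor
  · rintro ⟨F, hF, hσF⟩
    exact ⟨F.image f, hL F hF, Finset.image_subset_image hσF⟩
  · rintro ⟨G, hG, hσG⟩
    have facets_surjOn : Set.SurjOn (Finset.image f) L.toFinset L.toFinset :=
      Finset.surjOn_of_injOn_of_card_le _ (by simpa [Set.MapsTo] using hL)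
        (Finset.image_injective hf).injOn le_rfl
    obtain ⟨F, hF, rfl⟩ := facets_surjOn (List.mem_toFinset.2 hG)
    exact ⟨F, List.mem_toFinset.1 hF, (Finset.image_subset_image_iff hf).1 hσG⟩

theorem tau_eq_swap_mul_swap_mul_swap :
    tau = ⇑(Equiv.swap 0 7 * Equiv.swap 2 4 * Equiv.swap 6 8 : Equiv.Perm ℕ) := by
  funext v
  simp only [tau, Equiv.Perm.mul_apply, Equiv.swap_apply_def]
  grind

theorem tau_injective : Function.Injective tau := by
  rw [tau_eq_swap_mul_swap_mul_swap]
  exact Equiv.injective _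

/-- The permutation `τ = (0 7)(2 4)(6 8)` is a simplicial automorphism of `X̄`: a finite
set `σ` of vertices is a face of `X̄` if and only if `τ(σ)` is.  Moreover `τ` maps `A` to
`A`, and hence maps the relative complex `Q = X̄ ∖ A` to itself. -/
theorem tau_automorphism :
    (∀ σ : Finset ℕ, σ ∈ Xbar ↔ σ.image tau ∈ Xbar) ∧
    (∀ σ : Finset ℕ, σ ∈ Acx ↔ σ.image tau ∈ Acx) ∧
    (∀ σ : Finset ℕ, σ ∈ Xbar \ Acx ↔ σ.image tau ∈ Xbar \ Acx) := by
  have hX : ∀ σ : Finset ℕ, σ ∈ Xbar ↔ σ.image tau ∈ Xbar :=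
    mem_gen_iff_image_mem_gen tau_injective (by decide)
  have hA : ∀ σ : Finset ℕ, σ ∈ Acx ↔ σ.image tau ∈ Acx :=
    mem_gen_iff_image_mem_gen tau_injective (by decide)
  refine ⟨hX, hA, fun σ => ?_⟩
  rw [Finset.mem_sdiff, Finset.mem_sdiff, hX σ, hA σ]
end

section
/- Every pure shellable simplicial complex is partitionable. More precisely, if F_1,…,F_n is a shelling of a pure simplicial complex Δ and, for each j, R_j is the unique minimal element of {σ ⊆ F_j : σ ⊄ F_i for all i < j}, then Δ is the disjoint union of the Boolean intervals [R_1,F_1],…,[R_n,F_n], so these intervals form a partitioning of Δ. -/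
/-!
A face is new at step `j` of an ordering of the facets if `j` is the first index whose facet
contains it, so every face is new at exactly one step. The new faces at step `j` are closed under
enlargement within `F j`; hence, when they have a least element `R j`, they are exactly the
interval `[R j, F j]`.
-/

section NewFaces

variable {ι α : Type*} [Preorder α] {F R : ι → α} {σ : α}

/-- The faces added at step `j` of the ordering `F`: those contained in `F j` but in no earlier
`F i`. Faces are elements of an arbitrary preorder, with `≤` in the role of inclusion. -/
def newFaces [LT ι] (F : ι → α) (j : ι) : Set α :=
  {σ | σ ≤ F j ∧ ∀ i < j, ¬ σ ≤ F i}

theorem newFaces_eq_Icc_of_isLeast [LT ι] {j : ι} {ρ : α} (hρ : IsLeast (newFaces F j) ρ) :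
    newFaces F j = Set.Icc ρ (F j) :=
  Set.Subset.antisymm (fun _ hσ => ⟨hρ.2 hσ, hσ.1⟩)
    fun _ hσ => ⟨hσ.2, fun i hij hσi => hρ.1.2 i hij (hσ.1.trans hσi)⟩

variable [LinearOrder ι] [WellFoundedLT ι]

theorem existsUnique_mem_newFaces_iff : (∃! j, σ ∈ newFaces F j) ↔ ∃ j, σ ≤ F j := by
  refine ⟨fun ⟨j, hj, _⟩ => ⟨j, hj.1⟩, fun hσ => ?_⟩
  obtain ⟨j, hj, hfirst⟩ := wellFounded_lt.has_min {j | σ ≤ F j} hσ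
  refine ⟨j, ⟨hj, fun i hij hi => hfirst i hi hij⟩, fun k hk => ?_⟩
  exact le_antisymm (not_lt.1 fun hjk => hk.2 j hjk hj) (not_lt.1 (hfirst k hk.1))

theorem existsUnique_mem_Icc_iff_of_isLeast_newFaces (hR : ∀ j, IsLeast (newFaces F j) (R j)) :
    (∃! j, σ ∈ Set.Icc (R j) (F j)) ↔ ∃ j, σ ≤ F j := by
  simp only [← newFaces_eq_Icc_of_isLeast (hR _), existsUnique_mem_newFaces_iff]

end NewFaces

section Facets

variable {V ι : Type*} [DecidableEq V] {Δ : Finset (Finset V)} {F R : ι → Finset V}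
  {σ : Finset V}

theorem mem_facets_iff_maximal_s15 : σ ∈ facets Δ ↔ Maximal (· ∈ Δ) σ := by
  simp only [facets, Finset.mem_filter, maximal_iff]

theorem exists_mem_facets_superset (hσ : σ ∈ Δ) : ∃ G ∈ facets Δ, σ ⊆ G := by
  obtain ⟨G, hσG, hG⟩ := Δ.exists_le_maximal hσ
  exact ⟨G, mem_facets_iff_maximal_s15.2 hG, hσG⟩

theorem mem_iff_exists_subset_of_forall_mem_facets_iff (hΔ : IsLowerSet (Δ : Set (Finset V)))
    (hF : ∀ G, G ∈ facets Δ ↔ ∃ j, F j = G) : σ ∈ Δ ↔ ∃ j, σ ⊆ F j := by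
  constructor
  · intro hσ
    obtain ⟨G, hG, hσG⟩ := exists_mem_facets_superset hσ
    obtain ⟨j, rfl⟩ := (hF G).1 hG
    exact ⟨j, hσG⟩
  · rintro ⟨j, hσj⟩
    exact hΔ hσj (mem_facets_iff_maximal_s15.1 ((hF _).2 ⟨j, rfl⟩)).prop

theorem partitionable_of_existsUnique_mem_Icc (hF : ∀ G, G ∈ facets Δ ↔ ∃ j, F j = G)
    (hRF : ∀ j, R j ⊆ F j) (hsub : ∀ j, Set.Icc (R j) (F j) ⊆ (Δ : Set (Finset V)))
    (hunique : ∀ σ ∈ Δ, ∃! j, σ ∈ Set.Icc (R j) (F j)) : Partitionable Δ := by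
  have hinj : Function.Injective F := fun i j hij =>
    (hunique (F i) (hsub i ⟨hRF i, le_rfl⟩)).unique ⟨hRF i, le_rfl⟩ ⟨hij ▸ hRF j, hij.le⟩
  have hext (j : ι) : Function.extend F R id (F j) = R j := hinj.extend_apply R id j
  simp only [Partitionable, hF]
  refine ⟨Function.extend F R id, ?_, ?_, fun σ hσ => ?_⟩
  · rintro _ ⟨j, rfl⟩
    exact (hext j).subset.trans (hRF j)
  · rintro _ ⟨j, rfl⟩ σ hRσ hσF
    exact hsub j ⟨(hext j).superset.trans hRσ, hσF⟩
  · obtain ⟨j, ⟨hRσ, hσF⟩, hj⟩ := hunique σ hσ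
    refine ⟨F j, ⟨⟨j, rfl⟩, (hext j).subset.trans hRσ, hσF⟩, ?_⟩
    rintro _ ⟨⟨k, rfl⟩, hRkσ, hσFk⟩
    rw [hj k ⟨(hext k).superset.trans hRkσ, hσFk⟩]

theorem shellable_implies_partitionable_general [LinearOrder ι] [WellFoundedLT ι]
    (hΔ : IsLowerSet (Δ : Set (Finset V))) (hF : ∀ G, G ∈ facets Δ ↔ ∃ j, F j = G)
    (hR : ∀ j, IsLeast (newFaces F j) (R j)) :
    (∀ σ, σ ∈ Δ ↔ ∃! j, σ ∈ Set.Icc (R j) (F j)) ∧ Partitionable Δ := by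
  have hcover (σ : Finset V) : σ ∈ Δ ↔ ∃ j, σ ⊆ F j :=
    mem_iff_exists_subset_of_forall_mem_facets_iff hΔ hF
  have hpartition (σ : Finset V) : σ ∈ Δ ↔ ∃! j, σ ∈ Set.Icc (R j) (F j) :=
    (hcover σ).trans (existsUnique_mem_Icc_iff_of_isLeast_newFaces hR).symm
  exact ⟨hpartition, partitionable_of_existsUnique_mem_Icc hF (fun j => (hR j).1.1)
    (fun j σ hσ => (hcover σ).2 ⟨j, hσ.2⟩) fun σ => (hpartition σ).1⟩

end Facets

/-- Every pure shellable simplicial complex is partitionable.  More precisely, if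
`L = [F_1, …, F_n]` is a shelling of the pure simplicial complex `Δ` (an ordering of the
facets such that for each `j` the set `{σ ⊆ F_j : σ ⊄ F_i for all i < j}` has unique
minimal element `R_j`), then `Δ` is the disjoint union of the Boolean intervals
`[R_j, F_j]` — each face of `Δ` lies in exactly one interval `[R_j, F_j]`, and
conversely — so these intervals form a partitioning of `Δ` and `Δ` is partitionable. -/
theorem shellable_implies_partitionable
    {V : Type*} [DecidableEq V] (Δ : Finset (Finset V))
    (hcomplex : ∀ σ ∈ Δ, ∀ τ ⊆ σ, τ ∈ Δ)
    (hpure : ∀ F ∈ facets Δ, ∀ G ∈ facets Δ, F.card = G.card)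
    (L : List (Finset V)) (hnd : L.Nodup) (hfac : ∀ F, F ∈ L ↔ F ∈ facets Δ)
    (R : Fin L.length → Finset V)
    (hmin : ∀ j : Fin L.length,
      (R j ⊆ L.get j ∧ ∀ i : Fin L.length, i < j → ¬ R j ⊆ L.get i) ∧
      (∀ σ : Finset V, σ ⊆ L.get j → (∀ i : Fin L.length, i < j → ¬ σ ⊆ L.get i) →
        R j ⊆ σ)) :
    (∀ σ : Finset V, σ ∈ Δ ↔ ∃! j : Fin L.length, R j ⊆ σ ∧ σ ⊆ L.get j) ∧
      Partitionable Δ := by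
  exact shellable_implies_partitionable_general (fun σ τ hτσ hσ => hcomplex σ hσ τ hτσ)
    (fun G => (hfac G).symm.trans List.mem_iff_get)
    fun j => ⟨(hmin j).1, fun σ hσ => (hmin j).2 σ hσ.1 hσ.2⟩
end
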